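/- arXiv:2403.09889 — 4 statements merged into one kernel-verified Lean document; each statement's English description precedes it below -/
import Mathlib

section
/- Suppose V := sup_{s∈[0,1]} ∫‖θ‖₂² dν_s(θ) < ∞ and that the drift F(s,z) := α·∫σ(z,θ) dν_s(θ) is well defined and continuous on [0,1]×ℝ^d. Then for every x ∈ ℝ^d the mean-field forward ODE has exactly one C¹ solution z : [0,1] → ℝ^d with z(0) = x. -/
open MeasureTheory Real Set
open scoped RealInnerProductSpace

noncomputable section

/-- `σ(z, θ) = σ0(⟪w, z⟫ + b) • u` for `θ = (u, w, b) ∈ ℝ^d × ℝ^d × ℝ ≅ ℝ^{2d+1}`. -/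
def sigmaV (d : ℕ) (σ0 : ℝ → ℝ) (z : EuclideanSpace ℝ (Fin d))
    (θ : EuclideanSpace ℝ (Fin d) × EuclideanSpace ℝ (Fin d) × ℝ) : EuclideanSpace ℝ (Fin d) :=
  σ0 (⟪θ.2.1, z⟫ + θ.2.2) • θ.1

/-- `‖θ‖₂² = ‖u‖₂² + ‖w‖₂² + b²` for `θ = (u, w, b)`. -/
def thetaNormSq (d : ℕ) (θ : EuclideanSpace ℝ (Fin d) × EuclideanSpace ℝ (Fin d) × ℝ) : ℝ :=
  ‖θ.1‖ ^ 2 + ‖θ.2.1‖ ^ 2 + θ.2.2 ^ 2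

/-!
The drift is Lipschitz in `z`, uniformly in time: the ridge unit `z ↦ σ0 (⟪w, z⟫ + b) • u` is
Lipschitz with constant `C1 * ‖w‖ * ‖u‖ ≤ C1 * ‖θ‖₂²`, and the second moments are bounded by `V`.
Picard–Lindelöf applies on the whole interval at once to a *bounded* field, so multiply the drift by
a Lipschitz cutoff equal to `1` on a large ball around the initial point. The cutoff preserves the
linear growth of the drift, hence Grönwall's inequality confines the solution of the truncated
equation to that ball, where the truncation has no effect. Uniqueness is again Grönwall.
-/

open Metric
open scoped NNReal

section LipschitzEstimates

theorem lipschitzOnWith_smul_of_norm_le {X E : Type*} [PseudoMetricSpace X]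
    [SeminormedAddCommGroup E] [NormedSpace ℝ E] {s : Set X} {φ : X → ℝ} {f : X → E}
    {Cφ Cf A B : ℝ≥0} (hφ : LipschitzOnWith Cφ φ s) (hf : LipschitzOnWith Cf f s)
    (hφA : ∀ x ∈ s, ‖φ x‖ ≤ A) (hfB : ∀ x ∈ s, ‖f x‖ ≤ B) :
    LipschitzOnWith (A * Cf + Cφ * B) (fun x => φ x • f x) s := by
  refine LipschitzOnWith.of_dist_le_mul fun x hx y hy => ?_
  calc dist (φ x • f x) (φ y • f y)
      = ‖φ x • (f x - f y) + (φ x - φ y) • f y‖ := by rw [dist_eq_norm]; congr 1; module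
    _ ≤ ‖φ x‖ * dist (f x) (f y) + dist (φ x) (φ y) * ‖f y‖ := by
        rw [dist_eq_norm, dist_eq_norm, ← norm_smul, ← norm_smul]
        exact norm_add_le _ _
    _ ≤ A * (Cf * dist x y) + Cφ * dist x y * B := by
        gcongr
        exacts [hφA x hx, hf.dist_le_mul x hx y hy, hφ.dist_le_mul x hx y hy, hfB y hy]
    _ = ↑(A * Cf + Cφ * B) * dist x y := by push_cast; ring

theorem lipschitzWith_integral {X Θ F : Type*} [PseudoMetricSpace X] [MeasurableSpace Θ]
    [NormedAddCommGroup F] [NormedSpace ℝ F] {μ : Measure Θ} {g : X → Θ → F} {ℓ : Θ → ℝ} {K : ℝ≥0}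
    (hg : ∀ x, Integrable (g x) μ) (hℓ : Integrable ℓ μ) (hℓK : ∫ θ, ℓ θ ∂μ ≤ K)
    (hgℓ : ∀ x y, ∀ᵐ θ ∂μ, ‖g x θ - g y θ‖ ≤ ℓ θ * dist x y) :
    LipschitzWith K (fun x => ∫ θ, g x θ ∂μ) := by
  refine LipschitzWith.of_dist_le_mul fun x y => ?_
  calc dist (∫ θ, g x θ ∂μ) (∫ θ, g y θ ∂μ)
      = ‖∫ θ, (g x θ - g y θ) ∂μ‖ := by rw [dist_eq_norm, integral_sub (hg x) (hg y)]
    _ ≤ ∫ θ, ℓ θ * dist x y ∂μ := norm_integral_le_of_norm_le (hℓ.mul_const _) (hgℓ x y)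
    _ = (∫ θ, ℓ θ ∂μ) * dist x y := integral_mul_const _ _
    _ ≤ K * dist x y := by gcongr

theorem exists_norm_le_of_lipschitzOnWith_closedBall {T X F : Type*} [TopologicalSpace T]
    [PseudoMetricSpace X] [SeminormedAddCommGroup F] {v : T → X → F} {s : Set T} (hs : IsCompact s)
    {x : X} {r : ℝ} {C : ℝ≥0} (hlip : ∀ t ∈ s, LipschitzOnWith C (v t) (closedBall x r))
    (hcont : ContinuousOn (v · x) s) :
    ∃ B : ℝ≥0, ∀ t ∈ s, ∀ y ∈ closedBall x r, ‖v t y‖ ≤ B := by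
  obtain ⟨M, hM⟩ := hs.exists_bound_of_continuousOn hcont
  refine ⟨(C * r + M).toNNReal, fun t ht y hy => le_trans ?_ (Real.le_coe_toNNReal _)⟩
  have hx : x ∈ closedBall x r := mem_closedBall_self (dist_nonneg.trans hy)
  calc ‖v t y‖ ≤ dist (v t y) (v t x) + ‖v t x‖ := by
        rw [dist_eq_norm]
        exact norm_le_norm_sub_add _ _
    _ ≤ C * dist y x + M := add_le_add ((hlip t ht).dist_le_mul y hy x hx) (hM t ht)
    _ ≤ C * r + M := by gcongr; exact hy

theorem exists_lipschitzWith_cutoff {E : Type*} [SeminormedAddCommGroup E] [NormedSpace ℝ E]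
    (x : E) (R : ℝ≥0) : ∃ φ : E → ℝ, LipschitzWith 1 φ ∧ (∀ y, ‖φ y‖ ≤ 1) ∧
      (∀ y ∈ closedBall x R, φ y = 1) ∧ ∀ y ∉ closedBall x (1 + R), φ y = 0 := by
  refine ⟨fun y => thickenedIndicator one_pos (closedBall x R) y, ?_, fun y => ?_, fun y hy => ?_,
    fun y hy => ?_⟩
  · simpa using! lipschitzWith_thickenedIndicator one_pos (closedBall x (R : ℝ))
  · rw [NNReal.norm_eq]
    exact_mod_cast thickenedIndicator_le_one one_pos (closedBall x (R : ℝ)) y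
  · exact congrArg NNReal.toReal (thickenedIndicator_one one_pos _ hy)
  · have hy' : y ∉ thickening 1 (closedBall x (R : ℝ)) := by
      rw [thickening_closedBall one_pos R.coe_nonneg]
      exact fun h => hy (ball_subset_closedBall h)
    exact congrArg NNReal.toReal (thickenedIndicator_zero one_pos _ hy')

end LipschitzEstimates

section IntegralCurves

variable {E : Type*} [NormedAddCommGroup E] [NormedSpace ℝ E] {v : ℝ → E → E} {a b : ℝ}

theorem hasDerivWithinAt_Ici_of_isIntegralCurveOn_Icc {γ : ℝ → E}
    (hγ : IsIntegralCurveOn γ v (Icc a b)) {t : ℝ} (ht : t ∈ Ico a b) :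
    HasDerivWithinAt γ (v t (γ t)) (Ici t) t :=
  (hγ t (Ico_subset_Icc_self ht)).mono_of_mem_nhdsWithin (Icc_mem_nhdsGE_of_mem ht)

theorem eqOn_Icc_of_isIntegralCurveOn {γ γ' : ℝ → E} {K : ℝ≥0}
    (hv : ∀ t ∈ Icc a b, LipschitzWith K (v t)) (hγ : IsIntegralCurveOn γ v (Icc a b))
    (hγ' : IsIntegralCurveOn γ' v (Icc a b)) (h : γ a = γ' a) : EqOn γ γ' (Icc a b) :=
  ODE_solution_unique_of_mem_Icc_right (s := fun _ => univ)
    (fun t ht => (hv t (Ico_subset_Icc_self ht)).lipschitzOnWith)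
    hγ.continuousOn (fun _ => hasDerivWithinAt_Ici_of_isIntegralCurveOn_Icc hγ)
    (fun _ _ => mem_univ _)
    hγ'.continuousOn (fun _ => hasDerivWithinAt_Ici_of_isIntegralCurveOn_Icc hγ')
    (fun _ _ => mem_univ _) h

theorem norm_sub_le_gronwallBound_of_isIntegralCurveOn {γ : ℝ → E} {K M : ℝ}
    (hγ : IsIntegralCurveOn γ v (Icc a b))
    (hv : ∀ t ∈ Icc a b, ∀ y, ‖v t y‖ ≤ K * ‖y - γ a‖ + M) {t : ℝ} (ht : t ∈ Icc a b) :
    ‖γ t - γ a‖ ≤ gronwallBound 0 K M (t - a) :=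
  norm_le_gronwallBound_of_norm_deriv_right_le (f := fun s => γ s - γ a)
    (hγ.continuousOn.sub continuousOn_const)
    (fun _ hs => (hasDerivWithinAt_Ici_of_isIntegralCurveOn_Icc hγ hs).sub_const _)
    (by simp) (fun s hs => hv s (Ico_subset_Icc_self hs) (γ s)) t ht

variable [CompleteSpace E] {x : E}

theorem exists_isIntegralCurveOn_Icc_of_norm_le {t₀ : ℝ} (ht₀ : t₀ ∈ Icc a b) {L : ℝ≥0}
    (hlip : ∀ r : ℝ, ∃ C : ℝ≥0, ∀ t ∈ Icc a b, LipschitzOnWith C (v t) (closedBall x r))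
    (hcont : ∀ y, ContinuousOn (v · y) (Icc a b)) (hL : ∀ t ∈ Icc a b, ∀ y, ‖v t y‖ ≤ L) :
    ∃ γ : ℝ → E, γ t₀ = x ∧ IsIntegralCurveOn γ v (Icc a b) := by
  have hmax : 0 ≤ max (b - t₀) (t₀ - a) := le_max_of_le_left (sub_nonneg.2 ht₀.2)
  let r : ℝ≥0 := L * ⟨max (b - t₀) (t₀ - a), hmax⟩
  obtain ⟨C, hC⟩ := hlip r
  have hPL : IsPicardLindelof v ⟨t₀, ht₀⟩ x r 0 L C :=
    { lipschitzOnWith := hC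
      continuousOn := fun y _ => hcont y
      norm_le := fun t ht y _ => hL t ht y
      mul_max_le := (sub_zero (r : ℝ)).ge }
  exact hPL.exists_eq_forall_mem_Icc_hasDerivWithinAt₀

theorem exists_isIntegralCurveOn_Icc_smul {t₀ : ℝ} (ht₀ : t₀ ∈ Icc a b) {φ : E → ℝ} {Cφ A : ℝ≥0}
    {ρ : ℝ} (hφ_lip : LipschitzWith Cφ φ) (hφ_norm : ∀ y, ‖φ y‖ ≤ A)
    (hφ_zero : ∀ y ∉ closedBall x ρ, φ y = 0)
    (hlip : ∀ r : ℝ, ∃ C : ℝ≥0, ∀ t ∈ Icc a b, LipschitzOnWith C (v t) (closedBall x r))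
    (hcont : ∀ y, ContinuousOn (v · y) (Icc a b)) :
    ∃ γ : ℝ → E, γ t₀ = x ∧ IsIntegralCurveOn γ (fun t y => φ y • v t y) (Icc a b) := by
  have hbound (r : ℝ) : ∃ B : ℝ≥0, ∀ t ∈ Icc a b, ∀ y ∈ closedBall x r, ‖v t y‖ ≤ B :=
    let ⟨_, hC⟩ := hlip r
    exists_norm_le_of_lipschitzOnWith_closedBall isCompact_Icc hC (hcont x)
  obtain ⟨B, hB⟩ := hbound ρ
  refine exists_isIntegralCurveOn_Icc_of_norm_le ht₀ (L := A * B) (fun r => ?_)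
    (fun y => (hcont y).const_smul (φ y)) fun t ht y => ?_
  · obtain ⟨C, hC⟩ := hlip r
    obtain ⟨D, hD⟩ := hbound r
    exact ⟨_, fun t ht => lipschitzOnWith_smul_of_norm_le hφ_lip.lipschitzOnWith (hC t ht)
      (fun y _ => hφ_norm y) (hD t ht)⟩
  · by_cases hy : y ∈ closedBall x ρ
    · rw [norm_smul, NNReal.coe_mul]
      gcongr
      exacts [hφ_norm y, hB t ht y hy]
    · rw [hφ_zero y hy, zero_smul, norm_zero]
      exact NNReal.coe_nonneg _

theorem exists_isIntegralCurveOn_Icc_of_linear_growth (hab : a ≤ b) {K M : ℝ≥0}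
    (hlip : ∀ r : ℝ, ∃ C : ℝ≥0, ∀ t ∈ Icc a b, LipschitzOnWith C (v t) (closedBall x r))
    (hcont : ∀ y, ContinuousOn (v · y) (Icc a b))
    (hgrowth : ∀ t ∈ Icc a b, ∀ y, ‖v t y‖ ≤ K * ‖y - x‖ + M) :
    ∃ γ : ℝ → E, γ a = x ∧ IsIntegralCurveOn γ v (Icc a b) := by
  have hmono := gronwallBound_mono (δ := 0) le_rfl M.coe_nonneg K.coe_nonneg
  let R : ℝ≥0 := (gronwallBound 0 K M (b - a)).toNNReal
  obtain ⟨φ, hφ_lip, hφ_norm, hφ_one, hφ_zero⟩ := exists_lipschitzWith_cutoff x R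
  obtain ⟨γ, rfl, hγ⟩ := exists_isIntegralCurveOn_Icc_smul (left_mem_Icc.2 hab) (A := 1)
    hφ_lip hφ_norm hφ_zero hlip hcont
  refine ⟨γ, rfl, fun t ht => ?_⟩
  have htrunc_growth : ∀ s ∈ Icc a b, ∀ y, ‖φ y • v s y‖ ≤ K * ‖y - γ a‖ + M := fun s hs y => by
    rw [norm_smul]
    exact (mul_le_of_le_one_left (norm_nonneg _) (hφ_norm y)).trans (hgrowth s hs y)
  have hγR : γ t ∈ closedBall (γ a) R := mem_closedBall_iff_norm.2 <|
    calc ‖γ t - γ a‖ ≤ gronwallBound 0 K M (t - a) :=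
          norm_sub_le_gronwallBound_of_isIntegralCurveOn hγ htrunc_growth ht
      _ ≤ gronwallBound 0 K M (b - a) := hmono (sub_le_sub_right ht.2 a)
      _ ≤ R := Real.le_coe_toNNReal _
  simpa only [hφ_one _ hγR, one_smul] using hγ t ht

theorem exists_isIntegralCurveOn_Icc_of_lipschitzWith (hab : a ≤ b) {K : ℝ≥0}
    (hlip : ∀ t ∈ Icc a b, LipschitzWith K (v t)) (hcont : ∀ y, ContinuousOn (v · y) (Icc a b))
    (x : E) : ∃ γ : ℝ → E, γ a = x ∧ IsIntegralCurveOn γ v (Icc a b) := by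
  obtain ⟨M, hM⟩ := isCompact_Icc.exists_bound_of_continuousOn (hcont x)
  refine exists_isIntegralCurveOn_Icc_of_linear_growth hab (K := K) (M := M.toNNReal)
    (fun _ => ⟨K, fun t ht => (hlip t ht).lipschitzOnWith⟩) hcont fun t ht y => ?_
  calc ‖v t y‖ ≤ ‖v t y - v t x‖ + ‖v t x‖ := norm_le_norm_sub_add _ _
    _ ≤ K * ‖y - x‖ + M.toNNReal :=
        add_le_add ((hlip t ht).norm_sub_le y x) ((hM t ht).trans M.le_coe_toNNReal)

end IntegralCurves

section MeanField

variable {E F : Type*} [NormedAddCommGroup E] [InnerProductSpace ℝ E]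
  [NormedAddCommGroup F] [NormedSpace ℝ F]

/-- The ridge unit `σ(z, θ) = σ0 (⟪w, z⟫ + b) • u` with parameter `θ = (u, w, b)`, where inputs
range over a real inner product space and outputs over a real normed space. For
`E = F = EuclideanSpace ℝ (Fin d)` it unfolds to the same term as `sigmaV d`. -/
def ridgeUnit (σ0 : ℝ → ℝ) (z : E) (θ : F × E × ℝ) : F :=
  σ0 (⟪θ.2.1, z⟫ + θ.2.2) • θ.1

/-- The mean-field drift `F(s, z) = α • ∫ σ(z, θ) dν_s(θ)`, a time-dependent vector field. -/
def meanFieldDrift [MeasurableSpace E] (σ0 : ℝ → ℝ) (α : ℝ) (ν : ℝ → Measure (E × E × ℝ))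
    (s : ℝ) (z : E) : E :=
  α • ∫ θ, ridgeUnit σ0 z θ ∂(ν s)

theorem norm_ridgeUnit_sub_le {σ0 : ℝ → ℝ} {C : ℝ≥0} (hσ : LipschitzWith C σ0) (y z : E)
    (θ : F × E × ℝ) :
    ‖ridgeUnit σ0 y θ - ridgeUnit σ0 z θ‖ ≤ C * (‖θ.2.1‖ * ‖θ.1‖) * dist y z := by
  obtain ⟨u, w, c⟩ := θ
  calc ‖ridgeUnit σ0 y (u, w, c) - ridgeUnit σ0 z (u, w, c)‖
      = ‖σ0 (⟪w, y⟫ + c) - σ0 (⟪w, z⟫ + c)‖ * ‖u‖ := by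
        rw [ridgeUnit, ridgeUnit, ← sub_smul, norm_smul]
    _ ≤ C * ‖(⟪w, y⟫ + c) - (⟪w, z⟫ + c)‖ * ‖u‖ := by gcongr; exact hσ.norm_sub_le _ _
    _ = C * ‖⟪w, y - z⟫‖ * ‖u‖ := by rw [add_sub_add_right_eq_sub, ← inner_sub_right]
    _ ≤ C * (‖w‖ * ‖y - z‖) * ‖u‖ := by gcongr; exact norm_inner_le_norm w (y - z)
    _ = C * (‖w‖ * ‖u‖) * dist y z := by rw [dist_eq_norm]; ring

theorem lipschitzWith_integral_ridgeUnit [MeasurableSpace E] [MeasurableSpace F] {σ0 : ℝ → ℝ}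
    {C V : ℝ≥0} {μ : Measure (F × E × ℝ)} (hσ : LipschitzWith C σ0)
    (hmom : Integrable (fun θ => ‖θ.1‖ ^ 2 + ‖θ.2.1‖ ^ 2 + θ.2.2 ^ 2) μ)
    (hV : ∫ θ, ‖θ.1‖ ^ 2 + ‖θ.2.1‖ ^ 2 + θ.2.2 ^ 2 ∂μ ≤ V)
    (hint : ∀ z : E, Integrable (ridgeUnit σ0 z) μ) :
    LipschitzWith (C * V) (fun z => ∫ θ, ridgeUnit σ0 z θ ∂μ) := by
  refine lipschitzWith_integral hint (hmom.const_mul C) ?_ fun y z => ae_of_all μ fun θ => ?_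
  · rw [integral_const_mul, NNReal.coe_mul]
    gcongr
  · have hmul_le : ‖θ.2.1‖ * ‖θ.1‖ ≤ ‖θ.1‖ ^ 2 + ‖θ.2.1‖ ^ 2 + θ.2.2 ^ 2 := by
      nlinarith [two_mul_le_add_sq ‖θ.2.1‖ ‖θ.1‖, sq_nonneg θ.2.2, norm_nonneg θ.1,
        norm_nonneg θ.2.1]
    exact (norm_ridgeUnit_sub_le hσ y z θ).trans (by gcongr)

theorem statement4_general [CompleteSpace E] [MeasurableSpace E] {a b : ℝ} (hab : a ≤ b)
    {σ0 : ℝ → ℝ} {C : ℝ≥0} (hσ : LipschitzWith C σ0) (α : ℝ) (ν : ℝ → Measure (E × E × ℝ)) {V : ℝ}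
    (hmom : ∀ s ∈ Icc a b, Integrable (fun θ => ‖θ.1‖ ^ 2 + ‖θ.2.1‖ ^ 2 + θ.2.2 ^ 2) (ν s) ∧
      ∫ θ, ‖θ.1‖ ^ 2 + ‖θ.2.1‖ ^ 2 + θ.2.2 ^ 2 ∂(ν s) ≤ V)
    (hint : ∀ s ∈ Icc a b, ∀ z : E, Integrable (ridgeUnit σ0 z) (ν s))
    (hcont : ∀ z, ContinuousOn (meanFieldDrift σ0 α ν · z) (Icc a b)) (x : E) :
    ∃ z : ℝ → E, (z a = x ∧ IsIntegralCurveOn z (meanFieldDrift σ0 α ν) (Icc a b)) ∧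
      ∀ z' : ℝ → E, (z' a = x ∧ IsIntegralCurveOn z' (meanFieldDrift σ0 α ν) (Icc a b)) →
        EqOn z z' (Icc a b) := by
  have hlip : ∀ s ∈ Icc a b,
      LipschitzWith (‖α‖₊ * (C * V.toNNReal)) (meanFieldDrift σ0 α ν s) := fun s hs =>
    (lipschitzWith_smul α).comp <| lipschitzWith_integral_ridgeUnit hσ (hmom s hs).1
      ((hmom s hs).2.trans V.le_coe_toNNReal) (hint s hs)
  obtain ⟨z, hza, hz⟩ := exists_isIntegralCurveOn_Icc_of_lipschitzWith hab hlip hcont x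
  exact ⟨z, ⟨hza, hz⟩, fun z' ⟨hz'a, hz'⟩ =>
    eqOn_Icc_of_isIntegralCurveOn hlip hz hz' (hza.trans hz'a.symm)⟩

end MeanField

/-- existence and uniqueness of a C¹ solution of the mean-field forward ODE
`z(0) = x`, `z'(s) = α • ∫ σ(z(s), θ) dν_s(θ)` on `[0,1]`, under uniformly bounded second
moments and a well-defined continuous drift. -/
theorem statement4 (d : ℕ) (hd : 1 ≤ d) (C1 : ℝ) (hC1 : 0 < C1)
    (σ0 : ℝ → ℝ) (hσ : ContDiff ℝ 2 σ0)
    (hb0 : ∀ x : ℝ, |σ0 x| ≤ C1 * max |x| 1)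
    (hb1 : ∀ x : ℝ, |deriv σ0 x| ≤ C1)
    (hb2 : ∀ x : ℝ, |deriv (deriv σ0) x| ≤ C1)
    (α : ℝ) (hα : 0 < α)
    (ν : ℝ → Measure (EuclideanSpace ℝ (Fin d) × EuclideanSpace ℝ (Fin d) × ℝ))
    (hprob : ∀ s, IsProbabilityMeasure (ν s))
    -- V := sup_s ∫ ‖θ‖₂² dν_s < ∞ :
    (V : ℝ)
    (hmom : ∀ s ∈ Set.Icc (0 : ℝ) 1,
      Integrable (fun θ => thetaNormSq d θ) (ν s) ∧ ∫ θ, thetaNormSq d θ ∂(ν s) ≤ V)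
    -- the drift is well defined and continuous on [0,1] × ℝ^d :
    (hint : ∀ s ∈ Set.Icc (0 : ℝ) 1, ∀ z, Integrable (sigmaV d σ0 z) (ν s))
    (hcont : ContinuousOn
      (fun p : ℝ × EuclideanSpace ℝ (Fin d) => α • ∫ θ, sigmaV d σ0 p.2 θ ∂(ν p.1))
      (Set.Icc (0 : ℝ) 1 ×ˢ Set.univ)) :
    ∀ x : EuclideanSpace ℝ (Fin d),
      ∃ z : ℝ → EuclideanSpace ℝ (Fin d),
        (z 0 = x ∧ ∀ s ∈ Set.Icc (0 : ℝ) 1,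
          HasDerivWithinAt z (α • ∫ θ, sigmaV d σ0 (z s) θ ∂(ν s)) (Set.Icc (0 : ℝ) 1) s) ∧
        ∀ z' : ℝ → EuclideanSpace ℝ (Fin d),
          (z' 0 = x ∧ ∀ s ∈ Set.Icc (0 : ℝ) 1,
            HasDerivWithinAt z' (α • ∫ θ, sigmaV d σ0 (z' s) θ ∂(ν s)) (Set.Icc (0 : ℝ) 1) s) →
          Set.EqOn z z' (Set.Icc (0 : ℝ) 1) := by
  lift C1 to ℝ≥0 using hC1.le
  exact statement4_general zero_le_one
    (lipschitzWith_of_nnnorm_deriv_le (hσ.differentiable two_ne_zero) hb1) α ν hmom hint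
    fun z => hcont.uncurry_right (f := meanFieldDrift σ0 α ν) z (mem_univ z)

end
end

section
/- Let V := sup_{s∈[0,1]} ∫‖θ‖₂² dν_s(θ) < ∞ and let z : [0,1] → ℝ^d be any C¹ solution of the mean-field forward ODE with z(0) = x. Then for all s ∈ [0,1], ‖z(s)‖₂ ≤ (‖x‖₂+1)·exp(3·α·C1·(V+1)). -/
open MeasureTheory Real Set
open scoped RealInnerProductSpace

noncomputable section

/-!
Every term of `(‖w‖ ‖z‖ + |b| + 1) ‖u‖` is at most quadratic in the parameter `θ = (u, w, b)` and
at most linear in `z`, so by AM-GM a single neuron is bounded by `C (‖z‖ + 1) (‖θ‖² + 1)`.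
Averaging over `ν_s` gives `‖z'‖ ≤ α C (V + 1) (‖z‖ + 1)`, and by Grönwall's inequality `‖z‖ + 1`
grows at most exponentially at rate `α C (V + 1)`.
-/

section Gronwall

theorem gronwallBound_self (δ K x : ℝ) : gronwallBound δ K K x = (δ + 1) * exp (K * x) - 1 := by
  rcases eq_or_ne K 0 with rfl | hK
  · simp [gronwallBound_K0]
  · rw [gronwallBound_of_K_ne_0 hK, div_self hK]
    ring

theorem norm_add_one_le_mul_exp_of_norm_deriv_right_le {E : Type*} [NormedAddCommGroup E]
    [NormedSpace ℝ E] {f f' : ℝ → E} {K a b : ℝ} (hf : ContinuousOn f (Icc a b))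
    (hf' : ∀ t ∈ Ico a b, HasDerivWithinAt f (f' t) (Ici t) t)
    (bound : ∀ t ∈ Ico a b, ‖f' t‖ ≤ K * (‖f t‖ + 1)) :
    ∀ t ∈ Icc a b, ‖f t‖ + 1 ≤ (‖f a‖ + 1) * exp (K * (t - a)) := by
  intro t ht
  have hgronwall : ‖f t‖ ≤ gronwallBound ‖f a‖ K K (t - a) :=
    norm_le_gronwallBound_of_norm_deriv_right_le hf hf' le_rfl
      (fun s hs => (bound s hs).trans_eq (by ring)) t ht
  rw [gronwallBound_self] at hgronwall
  linarith

end Gronwall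

section Neuron

variable {E : Type*} [NormedAddCommGroup E]

/-- The squared Euclidean norm `‖u‖² + ‖w‖² + b²` of a neuron parameter `θ = (u, w, b)`; the product
type itself carries the sup norm. For `E = ℝ^d` it is definitionally `thetaNormSq d`. -/
def paramNormSq (θ : E × E × ℝ) : ℝ :=
  ‖θ.1‖ ^ 2 + ‖θ.2.1‖ ^ 2 + θ.2.2 ^ 2

theorem paramNormSq_nonneg (θ : E × E × ℝ) : 0 ≤ paramNormSq θ := by
  unfold paramNormSq
  positivity

theorem affine_mul_norm_le_mul_paramNormSq_add_one (z : E) (θ : E × E × ℝ) :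
    (‖θ.2.1‖ * ‖z‖ + |θ.2.2| + 1) * ‖θ.1‖ ≤ (‖z‖ + 1) * (paramNormSq θ + 1) := by
  obtain ⟨u, w, b⟩ := θ
  simp only [paramNormSq]
  rw [← sq_abs b]
  have hquadratic : ‖w‖ * ‖u‖ ≤ ‖u‖ ^ 2 + ‖w‖ ^ 2 + |b| ^ 2 + 1 := by
    nlinarith [two_mul_le_add_sq ‖w‖ ‖u‖]
  have haffine : (|b| + 1) * ‖u‖ ≤ ‖u‖ ^ 2 + ‖w‖ ^ 2 + |b| ^ 2 + 1 := by
    nlinarith [two_mul_le_add_sq |b| ‖u‖, two_mul_le_add_sq ‖u‖ 1]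
  calc (‖w‖ * ‖z‖ + |b| + 1) * ‖u‖ = ‖z‖ * (‖w‖ * ‖u‖) + (|b| + 1) * ‖u‖ := by ring
    _ ≤ ‖z‖ * (‖u‖ ^ 2 + ‖w‖ ^ 2 + |b| ^ 2 + 1) + (‖u‖ ^ 2 + ‖w‖ ^ 2 + |b| ^ 2 + 1) := by gcongr
    _ = (‖z‖ + 1) * (‖u‖ ^ 2 + ‖w‖ ^ 2 + |b| ^ 2 + 1) := by ring

variable [InnerProductSpace ℝ E]

/-- The neuron `σ₀(⟪w, z⟫ + b) • u` with activation `σ₀` and parameter `θ = (u, w, b)`, evaluated at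
`z`, in an arbitrary real inner product space. For `E = ℝ^d` it is definitionally `sigmaV d`. -/
def neuron (σ₀ : ℝ → ℝ) (z : E) (θ : E × E × ℝ) : E :=
  σ₀ (⟪θ.2.1, z⟫ + θ.2.2) • θ.1

theorem max_abs_inner_add_one_le (w z : E) (b : ℝ) :
    max |⟪w, z⟫ + b| 1 ≤ ‖w‖ * ‖z‖ + |b| + 1 := by
  have habs : |⟪w, z⟫ + b| ≤ ‖w‖ * ‖z‖ + |b| :=
    (abs_add_le _ _).trans (by gcongr; exact abs_real_inner_le_norm w z)
  exact max_le (by linarith) (le_add_of_nonneg_left (by positivity))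

variable {σ₀ : ℝ → ℝ} {C : ℝ}

theorem nonneg_of_abs_le_mul_max (hσ₀ : ∀ y, |σ₀ y| ≤ C * max |y| 1) : 0 ≤ C := by
  simpa using (abs_nonneg _).trans (hσ₀ 0)

theorem norm_neuron_le (hσ₀ : ∀ y, |σ₀ y| ≤ C * max |y| 1) (z : E) (θ : E × E × ℝ) :
    ‖neuron σ₀ z θ‖ ≤ C * (‖z‖ + 1) * (paramNormSq θ + 1) := by
  have hC : 0 ≤ C := nonneg_of_abs_le_mul_max hσ₀
  calc ‖neuron σ₀ z θ‖ = |σ₀ (⟪θ.2.1, z⟫ + θ.2.2)| * ‖θ.1‖ := norm_smul _ _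
    _ ≤ C * max |⟪θ.2.1, z⟫ + θ.2.2| 1 * ‖θ.1‖ := by gcongr; exact hσ₀ _
    _ ≤ C * (‖θ.2.1‖ * ‖z‖ + |θ.2.2| + 1) * ‖θ.1‖ := by
      gcongr; exact max_abs_inner_add_one_le _ _ _
    _ = C * ((‖θ.2.1‖ * ‖z‖ + |θ.2.2| + 1) * ‖θ.1‖) := mul_assoc _ _ _
    _ ≤ C * ((‖z‖ + 1) * (paramNormSq θ + 1)) := by
      gcongr C * ?_; exact affine_mul_norm_le_mul_paramNormSq_add_one z θ
    _ = C * (‖z‖ + 1) * (paramNormSq θ + 1) := (mul_assoc _ _ _).symm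

theorem norm_integral_neuron_le [MeasurableSpace E] {μ : Measure (E × E × ℝ)}
    [IsProbabilityMeasure μ] {V : ℝ} {z : E} (hσ₀ : ∀ y, |σ₀ y| ≤ C * max |y| 1)
    (hmoment : Integrable paramNormSq μ) (hV : ∫ θ, paramNormSq θ ∂μ ≤ V)
    (hneuron : Integrable (neuron σ₀ z) μ) :
    ‖∫ θ, neuron σ₀ z θ ∂μ‖ ≤ C * (‖z‖ + 1) * (V + 1) := by
  have hC : 0 ≤ C := nonneg_of_abs_le_mul_max hσ₀
  calc ‖∫ θ, neuron σ₀ z θ ∂μ‖ ≤ ∫ θ, ‖neuron σ₀ z θ‖ ∂μ := norm_integral_le_integral_norm _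
    _ ≤ ∫ θ, C * (‖z‖ + 1) * (paramNormSq θ + 1) ∂μ :=
      integral_mono hneuron.norm ((hmoment.add (integrable_const 1)).const_mul _)
        (norm_neuron_le hσ₀ z)
    _ = C * (‖z‖ + 1) * (∫ θ, paramNormSq θ ∂μ + 1) := by
      rw [integral_const_mul, integral_add hmoment (integrable_const 1)]
      simp
    _ ≤ C * (‖z‖ + 1) * (V + 1) := by gcongr

end Neuron

theorem statement5_general {E : Type*} [NormedAddCommGroup E] [InnerProductSpace ℝ E]
    [CompleteSpace E] [MeasurableSpace E] {σ₀ : ℝ → ℝ} {C α V a b : ℝ}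
    {ν : ℝ → Measure (E × E × ℝ)} [∀ s, IsProbabilityMeasure (ν s)] {z : ℝ → E}
    (hσ₀ : ∀ y, |σ₀ y| ≤ C * max |y| 1) (hα : 0 ≤ α)
    (hmoment : ∀ s ∈ Icc a b, Integrable paramNormSq (ν s) ∧ ∫ θ, paramNormSq θ ∂ν s ≤ V)
    (hneuron : ∀ s ∈ Icc a b, Integrable (neuron σ₀ (z s)) (ν s))
    (hz : ∀ s ∈ Icc a b,
      HasDerivWithinAt z (α • ∫ θ, neuron σ₀ (z s) θ ∂ν s) (Icc a b) s) :
    ∀ s ∈ Icc a b, ‖z s‖ + 1 ≤ (‖z a‖ + 1) * exp (α * C * (V + 1) * (s - a)) := by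
  refine norm_add_one_le_mul_exp_of_norm_deriv_right_le
    (fun s hs => (hz s hs).continuousWithinAt)
    (fun s hs => (hz s (Ico_subset_Icc_self hs)).mono_of_mem_nhdsWithin
      (Icc_mem_nhdsGE_of_mem hs)) fun s hs => ?_
  have hs' : s ∈ Icc a b := Ico_subset_Icc_self hs
  calc ‖α • ∫ θ, neuron σ₀ (z s) θ ∂ν s‖ = α * ‖∫ θ, neuron σ₀ (z s) θ ∂ν s‖ :=
        norm_smul_of_nonneg hα _
    _ ≤ α * (C * (‖z s‖ + 1) * (V + 1)) := by
      gcongr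
      exact norm_integral_neuron_le hσ₀ (hmoment s hs').1 (hmoment s hs').2 (hneuron s hs')
    _ = α * C * (V + 1) * (‖z s‖ + 1) := by ring

/-- a priori bound for any C¹ solution of the mean-field forward ODE:
`‖z(s)‖₂ ≤ (‖x‖₂ + 1) exp(3 α C1 (V+1))` on `[0,1]`. -/
theorem statement5 (d : ℕ) (hd : 1 ≤ d) (C1 : ℝ) (hC1 : 0 < C1)
    (σ0 : ℝ → ℝ) (hσ : ContDiff ℝ 2 σ0)
    (hb0 : ∀ x : ℝ, |σ0 x| ≤ C1 * max |x| 1)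
    (hb1 : ∀ x : ℝ, |deriv σ0 x| ≤ C1)
    (hb2 : ∀ x : ℝ, |deriv (deriv σ0) x| ≤ C1)
    (α : ℝ) (hα : 0 < α)
    (ν : ℝ → Measure (EuclideanSpace ℝ (Fin d) × EuclideanSpace ℝ (Fin d) × ℝ))
    (hprob : ∀ s, IsProbabilityMeasure (ν s))
    (V : ℝ)
    (hmom : ∀ s ∈ Set.Icc (0 : ℝ) 1,
      Integrable (fun θ => thetaNormSq d θ) (ν s) ∧ ∫ θ, thetaNormSq d θ ∂(ν s) ≤ V)
    (hint : ∀ s ∈ Set.Icc (0 : ℝ) 1, ∀ z, Integrable (sigmaV d σ0 z) (ν s))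
    (x : EuclideanSpace ℝ (Fin d)) (z : ℝ → EuclideanSpace ℝ (Fin d))
    (hz0 : z 0 = x)
    (hz : ∀ s ∈ Set.Icc (0 : ℝ) 1,
      HasDerivWithinAt z (α • ∫ θ, sigmaV d σ0 (z s) θ ∂(ν s)) (Set.Icc (0 : ℝ) 1) s) :
    ∀ s ∈ Set.Icc (0 : ℝ) 1, ‖z s‖ ≤ (‖x‖ + 1) * Real.exp (3 * α * C1 * (V + 1)) := by
  intro s hs
  have hV : 0 ≤ V := (integral_nonneg paramNormSq_nonneg).trans (hmom s hs).2
  have hgrowth : ‖z s‖ + 1 ≤ (‖z 0‖ + 1) * exp (α * C1 * (V + 1) * (s - 0)) :=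
    statement5_general hb0 hα.le hmom (fun t ht => hint t ht (z t)) hz s hs
  have hrate : α * C1 * (V + 1) * (s - 0) ≤ 3 * α * C1 * (V + 1) := by
    have hrate_nonneg : 0 ≤ α * C1 * (V + 1) := by positivity
    nlinarith [hs.2]
  calc ‖z s‖ ≤ (‖x‖ + 1) * exp (α * C1 * (V + 1) * (s - 0)) := by rw [← hz0]; linarith
    _ ≤ (‖x‖ + 1) * exp (3 * α * C1 * (V + 1)) := by gcongr

end
end

section
/- Let ν¹ = (ν¹_s)_{s∈[0,1]} and ν² = (ν²_s)_{s∈[0,1]} be two families of Borel probability measures on ℝ^{2d+1} with sup_{s} ∫‖θ‖₂² dν¹_s ≤ V and sup_{s} ∫‖θ‖₂² dν²_s ≤ V, and suppose that for each s ∈ [0,1] there is a coupling π_s of (ν¹_s, ν²_s) with ∫‖θ₁−θ₂‖₂² dπ_s(θ₁,θ₂) ≤ W². Let z₁ and z₂ be C¹ solutions of the mean-field forward ODEs driven by ν¹ and ν² respectively, with the same initial value x satisfying ‖x‖₂ ≤ 1. Then there exists a constant C > 0, depending only on d, C1, α and V, such that ‖z₁(s)−z₂(s)‖₂ ≤ C·W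 for all s ∈ [0,1]. -/
open MeasureTheory Real Set
open scoped RealInnerProductSpace

noncomputable section

/-!
Write `N θ = ‖θ‖₂` and let `σ0` be `K`-Lipschitz with `|σ0 0| ≤ K`. Then

  `‖σ(z₁, θ₁) - σ(z₂, θ₂)‖ ≤ K (((‖z₁‖ + 1) (N θ₁ + N θ₂) + 1) N (θ₁ - θ₂) + ‖z₁ - z₂‖ N θ₂ ^ 2)`.

Integrating against a coupling of cost at most `W²` and applying Cauchy–Schwarz to each product
containing `N (θ₁ - θ₂)`, the two velocity fields differ by at most a multiple of
`W + ‖z₁ - z₂‖`, as long as `‖z₁‖` stays bounded. Grönwall's inequality is used twice: once to bound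
`‖z₁‖` a priori from the linear growth of the velocity field, and once to bound `‖z₁ - z₂‖`.
-/

open scoped NNReal

theorem norm_le_gronwallBound_of_hasDerivWithinAt_Icc {E : Type*} [NormedAddCommGroup E]
    [NormedSpace ℝ E] {f f' : ℝ → E} {δ κ ε a b : ℝ} (hκ : 0 ≤ κ) (hε : 0 ≤ ε)
    (hf : ∀ t ∈ Icc a b, HasDerivWithinAt f (f' t) (Icc a b) t) (ha : ‖f a‖ ≤ δ)
    (bound : ∀ t ∈ Icc a b, ‖f' t‖ ≤ κ * ‖f t‖ + ε) :
    ∀ t ∈ Icc a b, ‖f t‖ ≤ gronwallBound δ κ ε (b - a) := fun t ht =>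
  calc ‖f t‖ ≤ gronwallBound δ κ ε (t - a) :=
        norm_le_gronwallBound_of_norm_deriv_right_le (HasDerivWithinAt.continuousOn hf)
          (fun s hs => (hf s (Ico_subset_Icc_self hs)).mono_of_mem_nhdsWithin
            (Icc_mem_nhdsGE_of_mem hs))
          ha (fun s hs => bound s (Ico_subset_Icc_self hs)) t ht
    _ ≤ gronwallBound δ κ ε (b - a) :=
        gronwallBound_mono ((norm_nonneg _).trans ha) hε hκ (sub_le_sub_right ht.2 a)

theorem gronwallBound_zero_mul (κ ε c x : ℝ) :
    gronwallBound 0 κ (ε * c) x = gronwallBound 0 κ ε x * c := by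
  unfold gronwallBound
  split_ifs <;> ring

theorem integral_mul_le_sqrt_mul_sqrt {Ω : Type*} [MeasurableSpace Ω] {μ : Measure Ω}
    {f g : Ω → ℝ} (hf : MemLp f 2 μ) (hg : MemLp g 2 μ) :
    ∫ ω, f ω * g ω ∂μ ≤ √(∫ ω, f ω ^ 2 ∂μ) * √(∫ ω, g ω ^ 2 ∂μ) := by
  have holder := integral_mul_norm_le_Lp_mul_Lq Real.HolderConjugate.two_two
    (by simpa using hf) (by simpa using hg)
  simp only [Real.norm_eq_abs, Real.rpow_two, sq_abs, ← Real.sqrt_eq_rpow, ← abs_mul] at holder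
  exact (integral_mono (hf.integrable_mul hg) (hf.integrable_mul hg).abs
    fun ω => le_abs_self _).trans holder

theorem abs_inner_add_le {E : Type*} [NormedAddCommGroup E] [InnerProductSpace ℝ E]
    (w z : E) (b : ℝ) : |⟪w, z⟫ + b| ≤ ‖w‖ * ‖z‖ + |b| :=
  (abs_add_le _ _).trans (by gcongr; exact abs_real_inner_le_norm w z)

theorem abs_inner_add_sub_inner_add_le {E : Type*} [NormedAddCommGroup E] [InnerProductSpace ℝ E]
    (w₁ w₂ z₁ z₂ : E) (b₁ b₂ : ℝ) :
    |(⟪w₁, z₁⟫ + b₁) - (⟪w₂, z₂⟫ + b₂)| ≤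
      ‖w₁ - w₂‖ * ‖z₁‖ + |b₁ - b₂| + ‖w₂‖ * ‖z₁ - z₂‖ := by
  have split : (⟪w₁, z₁⟫ + b₁) - (⟪w₂, z₂⟫ + b₂) =
      (⟪w₁ - w₂, z₁⟫ + (b₁ - b₂)) + ⟪w₂, z₁ - z₂⟫ := by
    rw [inner_sub_left, inner_sub_right]
    ring
  rw [split]
  exact (abs_add_le _ _).trans
    (add_le_add (abs_inner_add_le _ _ _) (abs_real_inner_le_norm _ _))

theorem abs_le_mul_abs_add_one_of_lipschitzWith {K : ℝ≥0} {f : ℝ → ℝ} (hf : LipschitzWith K f)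
    (hf0 : |f 0| ≤ K) (t : ℝ) : |f t| ≤ K * (|t| + 1) := by
  have lip : |f t - f 0| ≤ K * |t| := by simpa [Real.dist_eq] using hf.dist_le_mul t 0
  linarith [abs_sub_abs_le_abs_sub (f t) (f 0)]

/-- The space `ℝ^d × ℝ^d × ℝ ≅ ℝ^{2d+1}` of parameters `θ = (u, w, b)`. Its norm as a product is not
the Euclidean one, for which see `thetaNorm`. -/
abbrev Param (d : ℕ) : Type := EuclideanSpace ℝ (Fin d) × EuclideanSpace ℝ (Fin d) × ℝ

/-- The Euclidean norm `‖θ‖₂` on the parameter space. -/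
def thetaNorm (d : ℕ) (θ : Param d) : ℝ := √(thetaNormSq d θ)

/-- The random parameter `X`, defined on the measure space `(Ω, P)`, satisfies `𝔼 ‖X‖₂² ≤ V`, where
the expectation is required to be finite. For a law `ν` on the parameter space take `X = id`. -/
def HasSecondMomentLE {d : ℕ} {Ω : Type*} [MeasurableSpace Ω] (X : Ω → Param d) (P : Measure Ω)
    (V : ℝ) : Prop :=
  Integrable (fun ω => thetaNormSq d (X ω)) P ∧ ∫ ω, thetaNormSq d (X ω) ∂P ≤ V

/-- `P` is a coupling of `ν₁` and `ν₂` with quadratic transport cost at most `c`, so that the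
2-Wasserstein distance between `ν₁` and `ν₂` is at most `√c`. -/
structure IsCouplingOfCostLE {d : ℕ} (P : Measure (Param d × Param d)) (ν₁ ν₂ : Measure (Param d))
    (c : ℝ) : Prop where
  isProbabilityMeasure : IsProbabilityMeasure P
  map_fst : P.map Prod.fst = ν₁
  map_snd : P.map Prod.snd = ν₂
  cost_le : HasSecondMomentLE (fun p : Param d × Param d => p.1 - p.2) P c

/-- `z` solves the mean-field forward ODE with scaling `α` driven by `ν` on `[0, T]`; the
derivatives at the endpoints are one-sided. -/
def IsMeanFieldSolution {d : ℕ} (σ0 : ℝ → ℝ) (α : ℝ) (ν : ℝ → Measure (Param d)) (T : ℝ)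
    (z : ℝ → EuclideanSpace ℝ (Fin d)) : Prop :=
  ∀ s ∈ Icc 0 T, HasDerivWithinAt z (α • ∫ θ, sigmaV d σ0 (z s) θ ∂(ν s)) (Icc 0 T) s

section ThetaNorm

variable {d : ℕ} (θ : Param d)

theorem thetaNormSq_nonneg : 0 ≤ thetaNormSq d θ := by
  unfold thetaNormSq
  positivity

theorem thetaNorm_nonneg : 0 ≤ thetaNorm d θ := Real.sqrt_nonneg _

theorem sq_thetaNorm : thetaNorm d θ ^ 2 = thetaNormSq d θ := Real.sq_sqrt (thetaNormSq_nonneg θ)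

theorem norm_fst_le_thetaNorm : ‖θ.1‖ ≤ thetaNorm d θ :=
  Real.le_sqrt_of_sq_le (by unfold thetaNormSq; nlinarith [sq_nonneg ‖θ.2.1‖, sq_nonneg θ.2.2])

theorem norm_snd_fst_le_thetaNorm : ‖θ.2.1‖ ≤ thetaNorm d θ :=
  Real.le_sqrt_of_sq_le (by unfold thetaNormSq; nlinarith [sq_nonneg ‖θ.1‖, sq_nonneg θ.2.2])

theorem abs_snd_snd_le_thetaNorm : |θ.2.2| ≤ thetaNorm d θ :=
  Real.le_sqrt_of_sq_le (by
    unfold thetaNormSq; nlinarith [sq_nonneg ‖θ.1‖, sq_nonneg ‖θ.2.1‖, sq_abs θ.2.2])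

end ThetaNorm

section Activation

variable {d : ℕ} {K : ℝ≥0} {σ0 : ℝ → ℝ}

theorem continuous_sigmaV (hσ : Continuous σ0) (z : EuclideanSpace ℝ (Fin d)) :
    Continuous (sigmaV d σ0 z) := by
  unfold sigmaV
  fun_prop

theorem abs_activation_le (hσ : LipschitzWith K σ0) (hσ0 : |σ0 0| ≤ K)
    (z : EuclideanSpace ℝ (Fin d)) (θ : Param d) :
    |σ0 (⟪θ.2.1, z⟫ + θ.2.2)| ≤ K * ((‖z‖ + 1) * thetaNorm d θ + 1) :=
  calc |σ0 (⟪θ.2.1, z⟫ + θ.2.2)|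
      ≤ K * (|⟪θ.2.1, z⟫ + θ.2.2| + 1) := abs_le_mul_abs_add_one_of_lipschitzWith hσ hσ0 _
    _ ≤ K * (‖θ.2.1‖ * ‖z‖ + |θ.2.2| + 1) := by gcongr; exact abs_inner_add_le _ _ _
    _ ≤ K * (thetaNorm d θ * ‖z‖ + thetaNorm d θ + 1) := by
        gcongr
        exacts [norm_snd_fst_le_thetaNorm θ, abs_snd_snd_le_thetaNorm θ]
    _ = K * ((‖z‖ + 1) * thetaNorm d θ + 1) := by ring

theorem abs_activation_sub_le (hσ : LipschitzWith K σ0) (z₁ z₂ : EuclideanSpace ℝ (Fin d))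
    (θ₁ θ₂ : Param d) :
    |σ0 (⟪θ₁.2.1, z₁⟫ + θ₁.2.2) - σ0 (⟪θ₂.2.1, z₂⟫ + θ₂.2.2)| ≤
      K * ((‖z₁‖ + 1) * thetaNorm d (θ₁ - θ₂) + ‖z₁ - z₂‖ * thetaNorm d θ₂) :=
  calc |σ0 (⟪θ₁.2.1, z₁⟫ + θ₁.2.2) - σ0 (⟪θ₂.2.1, z₂⟫ + θ₂.2.2)|
      ≤ K * |(⟪θ₁.2.1, z₁⟫ + θ₁.2.2) - (⟪θ₂.2.1, z₂⟫ + θ₂.2.2)| := hσ.dist_le_mul _ _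
    _ ≤ K * (‖θ₁.2.1 - θ₂.2.1‖ * ‖z₁‖ + |θ₁.2.2 - θ₂.2.2| + ‖θ₂.2.1‖ * ‖z₁ - z₂‖) := by
        gcongr
        exact abs_inner_add_sub_inner_add_le _ _ _ _ _ _
    _ ≤ K * (thetaNorm d (θ₁ - θ₂) * ‖z₁‖ + thetaNorm d (θ₁ - θ₂) +
          thetaNorm d θ₂ * ‖z₁ - z₂‖) := by
        gcongr
        exacts [norm_snd_fst_le_thetaNorm (θ₁ - θ₂), abs_snd_snd_le_thetaNorm (θ₁ - θ₂),
          norm_snd_fst_le_thetaNorm θ₂]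
    _ = K * ((‖z₁‖ + 1) * thetaNorm d (θ₁ - θ₂) + ‖z₁ - z₂‖ * thetaNorm d θ₂) := by ring

theorem norm_sigmaV_le (hσ : LipschitzWith K σ0) (hσ0 : |σ0 0| ≤ K)
    (z : EuclideanSpace ℝ (Fin d)) (θ : Param d) :
    ‖sigmaV d σ0 z θ‖ ≤ K * ((‖z‖ + 1) * thetaNormSq d θ + thetaNorm d θ) :=
  calc ‖sigmaV d σ0 z θ‖ = |σ0 (⟪θ.2.1, z⟫ + θ.2.2)| * ‖θ.1‖ := norm_smul _ _
    _ ≤ K * ((‖z‖ + 1) * thetaNorm d θ + 1) * thetaNorm d θ :=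
        mul_le_mul (abs_activation_le hσ hσ0 z θ) (norm_fst_le_thetaNorm θ) (norm_nonneg _)
          ((abs_nonneg _).trans (abs_activation_le hσ hσ0 z θ))
    _ = K * ((‖z‖ + 1) * thetaNormSq d θ + thetaNorm d θ) := by rw [← sq_thetaNorm]; ring

theorem norm_sigmaV_sub_le (hσ : LipschitzWith K σ0) (hσ0 : |σ0 0| ≤ K)
    (z₁ z₂ : EuclideanSpace ℝ (Fin d)) (θ₁ θ₂ : Param d) :
    ‖sigmaV d σ0 z₁ θ₁ - sigmaV d σ0 z₂ θ₂‖ ≤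
      K * ((‖z₁‖ + 1) * (thetaNorm d θ₁ * thetaNorm d (θ₁ - θ₂)
          + thetaNorm d θ₂ * thetaNorm d (θ₁ - θ₂))
        + thetaNorm d (θ₁ - θ₂) + ‖z₁ - z₂‖ * thetaNormSq d θ₂) := by
  set t₁ := ⟪θ₁.2.1, z₁⟫ + θ₁.2.2
  set t₂ := ⟪θ₂.2.1, z₂⟫ + θ₂.2.2
  have abs_le := abs_activation_le hσ hσ0 z₁ θ₁
  have abs_sub_le := abs_activation_sub_le hσ z₁ z₂ θ₁ θ₂
  calc ‖sigmaV d σ0 z₁ θ₁ - sigmaV d σ0 z₂ θ₂‖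
      = ‖σ0 t₁ • (θ₁ - θ₂).1 + (σ0 t₁ - σ0 t₂) • θ₂.1‖ := by
        rw [Prod.fst_sub, smul_sub, sub_smul, sub_add_sub_cancel, sigmaV, sigmaV]
    _ ≤ |σ0 t₁| * ‖(θ₁ - θ₂).1‖ + |σ0 t₁ - σ0 t₂| * ‖θ₂.1‖ :=
        (norm_add_le _ _).trans_eq (by simp only [norm_smul, Real.norm_eq_abs])
    _ ≤ K * ((‖z₁‖ + 1) * thetaNorm d θ₁ + 1) * thetaNorm d (θ₁ - θ₂)
        + K * ((‖z₁‖ + 1) * thetaNorm d (θ₁ - θ₂) + ‖z₁ - z₂‖ * thetaNorm d θ₂)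
          * thetaNorm d θ₂ :=
        add_le_add
          (mul_le_mul abs_le (norm_fst_le_thetaNorm _) (norm_nonneg _)
            ((abs_nonneg _).trans abs_le))
          (mul_le_mul abs_sub_le (norm_fst_le_thetaNorm _) (norm_nonneg _)
            ((abs_nonneg _).trans abs_sub_le))
    _ = _ := by rw [← sq_thetaNorm θ₂]; ring

end Activation

section SecondMoment

variable {d : ℕ} {Ω : Type*} [MeasurableSpace Ω] {P : Measure Ω} {X Y : Ω → Param d} {V V' : ℝ}

namespace HasSecondMomentLE

theorem nonneg (hX : HasSecondMomentLE X P V) : 0 ≤ V :=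
  (integral_nonneg fun ω => thetaNormSq_nonneg (X ω)).trans hX.2

theorem of_map (hX : AEMeasurable X P) (h : HasSecondMomentLE id (P.map X) V) :
    HasSecondMomentLE X P V :=
  ⟨h.1.comp_aemeasurable hX, (integral_map hX h.1.aestronglyMeasurable).symm.trans_le h.2⟩

theorem memLp_thetaNorm (hX : HasSecondMomentLE X P V) :
    MemLp (fun ω => thetaNorm d (X ω)) 2 P := by
  have meas : AEStronglyMeasurable (fun ω => thetaNorm d (X ω)) P :=
    Real.continuous_sqrt.comp_aestronglyMeasurable hX.1.aestronglyMeasurable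
  refine (memLp_two_iff_integrable_sq meas).2 ?_
  simpa only [sq_thetaNorm] using hX.1

theorem integrable_thetaNorm [IsFiniteMeasure P] (hX : HasSecondMomentLE X P V) :
    Integrable (fun ω => thetaNorm d (X ω)) P :=
  hX.memLp_thetaNorm.integrable one_le_two

theorem integrable_thetaNorm_mul (hX : HasSecondMomentLE X P V) (hY : HasSecondMomentLE Y P V') :
    Integrable (fun ω => thetaNorm d (X ω) * thetaNorm d (Y ω)) P :=
  hX.memLp_thetaNorm.integrable_mul hY.memLp_thetaNorm

theorem integral_thetaNorm_mul_le (hX : HasSecondMomentLE X P V) (hY : HasSecondMomentLE Y P V') :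
    ∫ ω, thetaNorm d (X ω) * thetaNorm d (Y ω) ∂P ≤ √V * √V' := by
  have cauchy_schwarz := integral_mul_le_sqrt_mul_sqrt hX.memLp_thetaNorm hY.memLp_thetaNorm
  simp only [sq_thetaNorm] at cauchy_schwarz
  exact cauchy_schwarz.trans (by gcongr; exacts [hX.2, hY.2])

theorem integral_thetaNorm_le [IsProbabilityMeasure P] (hX : HasSecondMomentLE X P V) :
    ∫ ω, thetaNorm d (X ω) ∂P ≤ √V := by
  have cauchy_schwarz := integral_mul_le_sqrt_mul_sqrt hX.memLp_thetaNorm (memLp_const (1 : ℝ))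
  simp only [sq_thetaNorm, mul_one, one_pow, integral_const, probReal_univ, smul_eq_mul,
    Real.sqrt_one] at cauchy_schwarz
  exact cauchy_schwarz.trans (Real.sqrt_le_sqrt hX.2)

end HasSecondMomentLE

variable {K : ℝ≥0} {σ0 : ℝ → ℝ}

theorem integrable_sigmaV_comp [IsFiniteMeasure P] (hσ : LipschitzWith K σ0) (hσ0 : |σ0 0| ≤ K)
    (hXm : AEMeasurable X P) (hX : HasSecondMomentLE X P V) (z : EuclideanSpace ℝ (Fin d)) :
    Integrable (fun ω => sigmaV d σ0 z (X ω)) P :=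
  (((hX.1.const_mul (‖z‖ + 1)).fun_add hX.integrable_thetaNorm).const_mul K).mono'
    ((continuous_sigmaV hσ.continuous z).comp_aestronglyMeasurable hXm.aestronglyMeasurable)
    (.of_forall fun ω => norm_sigmaV_le hσ hσ0 z (X ω))

variable [IsProbabilityMeasure P]

theorem norm_integral_sigmaV_comp_le (hσ : LipschitzWith K σ0) (hσ0 : |σ0 0| ≤ K)
    (hX : HasSecondMomentLE X P V) (z : EuclideanSpace ℝ (Fin d)) :
    ‖∫ ω, sigmaV d σ0 z (X ω) ∂P‖ ≤ K * ((‖z‖ + 1) * V + √V) := by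
  have intSq := hX.1.const_mul (‖z‖ + 1)
  have intN := hX.integrable_thetaNorm
  calc ‖∫ ω, sigmaV d σ0 z (X ω) ∂P‖
      ≤ ∫ ω, K * ((‖z‖ + 1) * thetaNormSq d (X ω) + thetaNorm d (X ω)) ∂P :=
        norm_integral_le_of_norm_le ((intSq.fun_add intN).const_mul K)
          (.of_forall fun ω => norm_sigmaV_le hσ hσ0 z (X ω))
    _ = K * ((‖z‖ + 1) * ∫ ω, thetaNormSq d (X ω) ∂P + ∫ ω, thetaNorm d (X ω) ∂P) := by
        rw [integral_const_mul, integral_add intSq intN, integral_const_mul]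
    _ ≤ K * ((‖z‖ + 1) * V + √V) := by
        gcongr
        exacts [hX.2, hX.integral_thetaNorm_le]

theorem norm_integral_sigmaV_comp_sub_le (hσ : LipschitzWith K σ0) (hσ0 : |σ0 0| ≤ K)
    (hXm : AEMeasurable X P) (hYm : AEMeasurable Y P) {V₁ V₂ : ℝ} (hX : HasSecondMomentLE X P V₁)
    (hY : HasSecondMomentLE Y P V₂) {W : ℝ} (hW : 0 ≤ W)
    (hXY : HasSecondMomentLE (fun ω => X ω - Y ω) P (W ^ 2)) (z₁ z₂ : EuclideanSpace ℝ (Fin d)) :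
    ‖∫ ω, sigmaV d σ0 z₁ (X ω) ∂P - ∫ ω, sigmaV d σ0 z₂ (Y ω) ∂P‖ ≤
      K * ((‖z₁‖ + 1) * (√V₁ * W + √V₂ * W) + W + ‖z₁ - z₂‖ * V₂) := by
  have intX := hX.integrable_thetaNorm_mul hXY
  have intY := hY.integrable_thetaNorm_mul hXY
  have intProd := (intX.fun_add intY).const_mul (‖z₁‖ + 1)
  have intDiff := hXY.integrable_thetaNorm
  have intSq := hY.1.const_mul ‖z₁ - z₂‖
  have csX := hX.integral_thetaNorm_mul_le hXY
  have csY := hY.integral_thetaNorm_mul_le hXY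
  have csDiff := hXY.integral_thetaNorm_le
  rw [Real.sqrt_sq hW] at csX csY csDiff
  calc ‖∫ ω, sigmaV d σ0 z₁ (X ω) ∂P - ∫ ω, sigmaV d σ0 z₂ (Y ω) ∂P‖
      = ‖∫ ω, (sigmaV d σ0 z₁ (X ω) - sigmaV d σ0 z₂ (Y ω)) ∂P‖ := by
        rw [integral_sub (integrable_sigmaV_comp hσ hσ0 hXm hX z₁)
          (integrable_sigmaV_comp hσ hσ0 hYm hY z₂)]
    _ ≤ ∫ ω, K * ((‖z₁‖ + 1) * (thetaNorm d (X ω) * thetaNorm d (X ω - Y ω)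
            + thetaNorm d (Y ω) * thetaNorm d (X ω - Y ω))
          + thetaNorm d (X ω - Y ω) + ‖z₁ - z₂‖ * thetaNormSq d (Y ω)) ∂P :=
        norm_integral_le_of_norm_le (((intProd.fun_add intDiff).fun_add intSq).const_mul K)
          (.of_forall fun ω => norm_sigmaV_sub_le hσ hσ0 z₁ z₂ (X ω) (Y ω))
    _ = K * ((‖z₁‖ + 1) * (∫ ω, thetaNorm d (X ω) * thetaNorm d (X ω - Y ω) ∂P
            + ∫ ω, thetaNorm d (Y ω) * thetaNorm d (X ω - Y ω) ∂P)
          + ∫ ω, thetaNorm d (X ω - Y ω) ∂P + ‖z₁ - z₂‖ * ∫ ω, thetaNormSq d (Y ω) ∂P) := by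
        rw [integral_const_mul, integral_add (intProd.fun_add intDiff) intSq,
          integral_add intProd intDiff, integral_const_mul, integral_add intX intY,
          integral_const_mul]
    _ ≤ K * ((‖z₁‖ + 1) * (√V₁ * W + √V₂ * W) + W + ‖z₁ - z₂‖ * V₂) := by
        gcongr
        exact hY.2

end SecondMoment

namespace IsCouplingOfCostLE

variable {d : ℕ} {P : Measure (Param d × Param d)} {ν₁ ν₂ : Measure (Param d)}

theorem isProbabilityMeasure_left {c : ℝ} (hP : IsCouplingOfCostLE P ν₁ ν₂ c) :
    IsProbabilityMeasure ν₁ := by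
  have := hP.isProbabilityMeasure
  exact hP.map_fst ▸ Measure.isProbabilityMeasure_map measurable_fst.aemeasurable

theorem norm_integral_sigmaV_sub_le {K : ℝ≥0} {σ0 : ℝ → ℝ} (hσ : LipschitzWith K σ0)
    (hσ0 : |σ0 0| ≤ K) {V₁ V₂ W : ℝ} (hW : 0 ≤ W) (hP : IsCouplingOfCostLE P ν₁ ν₂ (W ^ 2))
    (hν₁ : HasSecondMomentLE id ν₁ V₁) (hν₂ : HasSecondMomentLE id ν₂ V₂)
    (z₁ z₂ : EuclideanSpace ℝ (Fin d)) :
    ‖∫ θ, sigmaV d σ0 z₁ θ ∂ν₁ - ∫ θ, sigmaV d σ0 z₂ θ ∂ν₂‖ ≤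
      K * ((‖z₁‖ + 1) * (√V₁ * W + √V₂ * W) + W + ‖z₁ - z₂‖ * V₂) := by
  obtain ⟨_, rfl, rfl, hcost⟩ := hP
  have hfst : AEMeasurable Prod.fst P := measurable_fst.aemeasurable
  have hsnd : AEMeasurable Prod.snd P := measurable_snd.aemeasurable
  have hcont := continuous_sigmaV (d := d) hσ.continuous
  rw [integral_map hfst (hcont z₁).aestronglyMeasurable,
    integral_map hsnd (hcont z₂).aestronglyMeasurable]
  exact norm_integral_sigmaV_comp_sub_le hσ hσ0 hfst hsnd (.of_map hfst hν₁) (.of_map hsnd hν₂)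
    hW hcost z₁ z₂

end IsCouplingOfCostLE

/-- An a priori bound on `[0, T]` for solutions of the mean-field forward ODE whose initial value
has norm at most `r` and whose driving measures have second moments at most `V`. -/
def trajectoryRadius (K : ℝ≥0) (α V r T : ℝ) : ℝ :=
  gronwallBound r (|α| * (K * V)) (|α| * (K * (V + √V))) T

/-- The factor by which `W` is multiplied in the stability estimate on `[0, T]` for two
trajectories, the first of which stays in the ball of radius `R`. -/
def stabilityConstant (K : ℝ≥0) (α V R T : ℝ) : ℝ :=
  gronwallBound 0 (|α| * (K * V)) (|α| * (K * (2 * (R + 1) * √V + 1))) T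

namespace IsMeanFieldSolution

variable {d : ℕ} {K : ℝ≥0} {σ0 : ℝ → ℝ} {α V r R T : ℝ}

theorem norm_le_trajectoryRadius (hσ : LipschitzWith K σ0) (hσ0 : |σ0 0| ≤ K)
    {ν : ℝ → Measure (Param d)} (hprob : ∀ s ∈ Icc 0 T, IsProbabilityMeasure (ν s))
    (hν : ∀ s ∈ Icc 0 T, HasSecondMomentLE id (ν s) V) {z : ℝ → EuclideanSpace ℝ (Fin d)}
    (hz : IsMeanFieldSolution σ0 α ν T z) (hz0 : ‖z 0‖ ≤ r) :
    ∀ s ∈ Icc 0 T, ‖z s‖ ≤ trajectoryRadius K α V r T := by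
  intro s hs
  have hV := (hν s hs).nonneg
  rw [trajectoryRadius, ← sub_zero T]
  refine norm_le_gronwallBound_of_hasDerivWithinAt_Icc (by positivity) (by positivity) hz hz0
    (fun t ht => ?_) s hs
  have := hprob t ht
  calc ‖α • ∫ θ, sigmaV d σ0 (z t) θ ∂(ν t)‖
      = |α| * ‖∫ θ, sigmaV d σ0 (z t) θ ∂(ν t)‖ := norm_smul _ _
    _ ≤ |α| * (K * ((‖z t‖ + 1) * V + √V)) := by
        gcongr
        exact norm_integral_sigmaV_comp_le hσ hσ0 (hν t ht) (z t)
    _ = |α| * (K * V) * ‖z t‖ + |α| * (K * (V + √V)) := by ring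

theorem norm_sub_le_stabilityConstant_mul (hσ : LipschitzWith K σ0) (hσ0 : |σ0 0| ≤ K)
    {ν₁ ν₂ : ℝ → Measure (Param d)} (hν₁ : ∀ s ∈ Icc 0 T, HasSecondMomentLE id (ν₁ s) V)
    (hν₂ : ∀ s ∈ Icc 0 T, HasSecondMomentLE id (ν₂ s) V) {W : ℝ} (hW : 0 ≤ W)
    {P : ℝ → Measure (Param d × Param d)}
    (hP : ∀ s ∈ Icc 0 T, IsCouplingOfCostLE (P s) (ν₁ s) (ν₂ s) (W ^ 2))
    {z₁ z₂ : ℝ → EuclideanSpace ℝ (Fin d)} (hz₁ : IsMeanFieldSolution σ0 α ν₁ T z₁)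
    (hz₂ : IsMeanFieldSolution σ0 α ν₂ T z₂) (hz0 : z₁ 0 = z₂ 0)
    (hR : ∀ s ∈ Icc 0 T, ‖z₁ s‖ ≤ R) :
    ∀ s ∈ Icc 0 T, ‖z₁ s - z₂ s‖ ≤ stabilityConstant K α V R T * W := by
  intro s hs
  have hV := (hν₁ s hs).nonneg
  have hR0 := (norm_nonneg _).trans (hR s hs)
  rw [stabilityConstant, ← gronwallBound_zero_mul, ← sub_zero T]
  refine norm_le_gronwallBound_of_hasDerivWithinAt_Icc (by positivity) (by positivity)
    (fun t ht => (hz₁ t ht).sub (hz₂ t ht)) (by simp [hz0]) (fun t ht => ?_) s hs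
  calc ‖α • ∫ θ, sigmaV d σ0 (z₁ t) θ ∂(ν₁ t) - α • ∫ θ, sigmaV d σ0 (z₂ t) θ ∂(ν₂ t)‖
      = |α| * ‖∫ θ, sigmaV d σ0 (z₁ t) θ ∂(ν₁ t) - ∫ θ, sigmaV d σ0 (z₂ t) θ ∂(ν₂ t)‖ := by
        rw [← smul_sub, norm_smul, Real.norm_eq_abs]
    _ ≤ |α| * (K * ((‖z₁ t‖ + 1) * (√V * W + √V * W) + W + ‖z₁ t - z₂ t‖ * V)) := by
        gcongr
        exact (hP t ht).norm_integral_sigmaV_sub_le hσ hσ0 hW (hν₁ t ht) (hν₂ t ht) _ _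
    _ ≤ |α| * (K * ((R + 1) * (√V * W + √V * W) + W + ‖z₁ t - z₂ t‖ * V)) := by
        gcongr
        exact hR t ht
    _ = |α| * (K * V) * ‖z₁ t - z₂ t‖ + |α| * (K * (2 * (R + 1) * √V + 1)) * W := by ring

end IsMeanFieldSolution

theorem statement6_general (K : ℝ≥0) (α V r T : ℝ) :
    ∃ C > 0, ∀ (d : ℕ) (σ0 : ℝ → ℝ), LipschitzWith K σ0 → |σ0 0| ≤ K →
      ∀ ν₁ ν₂ : ℝ → Measure (Param d),
      (∀ s ∈ Icc 0 T, HasSecondMomentLE id (ν₁ s) V) →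
      (∀ s ∈ Icc 0 T, HasSecondMomentLE id (ν₂ s) V) →
      ∀ W : ℝ, 0 ≤ W → ∀ P : ℝ → Measure (Param d × Param d),
      (∀ s ∈ Icc 0 T, IsCouplingOfCostLE (P s) (ν₁ s) (ν₂ s) (W ^ 2)) →
      ∀ z₁ z₂ : ℝ → EuclideanSpace ℝ (Fin d), ‖z₁ 0‖ ≤ r → z₁ 0 = z₂ 0 →
      IsMeanFieldSolution σ0 α ν₁ T z₁ → IsMeanFieldSolution σ0 α ν₂ T z₂ →
      ∀ s ∈ Icc 0 T, ‖z₁ s - z₂ s‖ ≤ C * W := by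
  refine ⟨max 1 (stabilityConstant K α V (trajectoryRadius K α V r T) T),
    zero_lt_one.trans_le (le_max_left _ _), ?_⟩
  intro d σ0 hσ hσ0 ν₁ ν₂ hν₁ hν₂ W hW P hP z₁ z₂ hr hz0 hz₁ hz₂ s hs
  have hbounded := hz₁.norm_le_trajectoryRadius hσ hσ0 
    (fun t ht => (hP t ht).isProbabilityMeasure_left) hν₁ hr
  exact (hz₁.norm_sub_le_stabilityConstant_mul hσ hσ0 hν₁ hν₂ hW hP hz₂ hz0 hbounded s hs).trans
    (mul_le_mul_of_nonneg_right (le_max_right _ _) hW)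

/-- stability in the driving measures of solutions of the mean-field forward ODE.
If the two families are `W`-close in the (coupling formulation of the) 2-Wasserstein distance,
uniformly in `s`, then the two solutions from the same initial point `x`, `‖x‖₂ ≤ 1`, stay
`C·W`-close, with `C` depending only on `d`, `C1`, `α` and `V`. -/
theorem statement6 (d : ℕ) (hd : 1 ≤ d) (C1 : ℝ) (hC1 : 0 < C1) (α : ℝ) (hα : 0 < α) (V : ℝ) :
    ∃ C > 0, ∀ σ0 : ℝ → ℝ, ContDiff ℝ 2 σ0 →
      (∀ x : ℝ, |σ0 x| ≤ C1 * max |x| 1) →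
      (∀ x : ℝ, |deriv σ0 x| ≤ C1) →
      (∀ x : ℝ, |deriv (deriv σ0) x| ≤ C1) →
      ∀ ν₁ ν₂ : ℝ → Measure (EuclideanSpace ℝ (Fin d) × EuclideanSpace ℝ (Fin d) × ℝ),
      (∀ s, IsProbabilityMeasure (ν₁ s)) → (∀ s, IsProbabilityMeasure (ν₂ s)) →
      (∀ s ∈ Set.Icc (0 : ℝ) 1,
        Integrable (fun θ => thetaNormSq d θ) (ν₁ s) ∧ ∫ θ, thetaNormSq d θ ∂(ν₁ s) ≤ V) →
      (∀ s ∈ Set.Icc (0 : ℝ) 1,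
        Integrable (fun θ => thetaNormSq d θ) (ν₂ s) ∧ ∫ θ, thetaNormSq d θ ∂(ν₂ s) ≤ V) →
      (∀ s ∈ Set.Icc (0 : ℝ) 1, ∀ z, Integrable (sigmaV d σ0 z) (ν₁ s)) →
      (∀ s ∈ Set.Icc (0 : ℝ) 1, ∀ z, Integrable (sigmaV d σ0 z) (ν₂ s)) →
      ∀ W : ℝ, 0 ≤ W →
      -- for each s, a coupling π_s of (ν₁_s, ν₂_s) with ∫ ‖θ₁ − θ₂‖₂² dπ_s ≤ W² :
      ∀ Pi : ℝ → Measure ((EuclideanSpace ℝ (Fin d) × EuclideanSpace ℝ (Fin d) × ℝ) ×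
                          (EuclideanSpace ℝ (Fin d) × EuclideanSpace ℝ (Fin d) × ℝ)),
      (∀ s ∈ Set.Icc (0 : ℝ) 1,
        (Pi s).map Prod.fst = ν₁ s ∧ (Pi s).map Prod.snd = ν₂ s ∧
        Integrable (fun p => thetaNormSq d (p.1 - p.2)) (Pi s) ∧
        ∫ p, thetaNormSq d (p.1 - p.2) ∂(Pi s) ≤ W ^ 2) →
      ∀ x : EuclideanSpace ℝ (Fin d), ‖x‖ ≤ 1 →
      ∀ z₁ z₂ : ℝ → EuclideanSpace ℝ (Fin d),
      z₁ 0 = x → z₂ 0 = x →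
      (∀ s ∈ Set.Icc (0 : ℝ) 1,
        HasDerivWithinAt z₁ (α • ∫ θ, sigmaV d σ0 (z₁ s) θ ∂(ν₁ s)) (Set.Icc (0 : ℝ) 1) s) →
      (∀ s ∈ Set.Icc (0 : ℝ) 1,
        HasDerivWithinAt z₂ (α • ∫ θ, sigmaV d σ0 (z₂ s) θ ∂(ν₂ s)) (Set.Icc (0 : ℝ) 1) s) →
      ∀ s ∈ Set.Icc (0 : ℝ) 1, ‖z₁ s - z₂ s‖ ≤ C * W := by
  lift C1 to ℝ≥0 using hC1.le
  obtain ⟨C, hC, hstable⟩ := statement6_general C1 α V 1 1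
  refine ⟨C, hC, fun σ0 hσ hgrowth hderiv _ ν₁ ν₂ hprob _ hν₁ hν₂ _ _ W hW Pi hPi x hx z₁ z₂ hz₁0
    hz₂0 hz₁ hz₂ => ?_⟩
  have hPi_prob (s) (hs : s ∈ Icc (0 : ℝ) 1) : IsProbabilityMeasure (Pi s) :=
    (Measure.isProbabilityMeasure_map_iff measurable_fst.aemeasurable).1 ((hPi s hs).1 ▸ hprob s)
  exact hstable d σ0 (lipschitzWith_of_nnnorm_deriv_le (hσ.differentiable two_ne_zero) hderiv)
    (by simpa using hgrowth 0) ν₁ ν₂ hν₁ hν₂ W hW Pi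
    (fun s hs => ⟨hPi_prob s hs, (hPi s hs).1, (hPi s hs).2.1, (hPi s hs).2.2⟩)
    z₁ z₂ (hz₁0 ▸ hx) (hz₁0.trans hz₂0.symm) hz₁ hz₂

end
end

section
/- Let A > 0 and c > 0, and let u : [0,∞) → ℝ be differentiable with u(t) ≥ 0 for all t, u(0) = 0, and u'(t) ≤ A·exp(−c·t)·√(u(t)) for all t ≥ 0. Then u(t) ≤ A²/(4c²) for all t ≥ 0. -/
open Real Set

/-!
Formally `(√u)' = u' / (2√u) ≤ (A / 2) e^{-ct}`, and integrating from `0` gives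
`√(u t) ≤ (A / (2c)) (1 - e^{-ct}) ≤ A / (2c)`. Since `√` is not differentiable where `u` vanishes,
the estimate is first carried out for `√(u + ε)` and then `ε` is sent to `0`.
-/

section SqrtComparison

variable {D : Set ℝ} {u u' : ℝ → ℝ}

theorem antitoneOn_sqrt_add_sub_of_deriv_le_mul_sqrt {G g : ℝ → ℝ} {ε : ℝ} (hε : 0 < ε)
    (hD : Convex ℝ D) (hu_cont : ContinuousOn u D) (hG_cont : ContinuousOn G D)
    (hu : ∀ x ∈ interior D, HasDerivWithinAt u (u' x) (interior D) x)
    (hG : ∀ x ∈ interior D, HasDerivWithinAt G (g x) (interior D) x)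
    (hu_nonneg : ∀ x ∈ interior D, 0 ≤ u x) (hg_nonneg : ∀ x ∈ interior D, 0 ≤ g x)
    (hle : ∀ x ∈ interior D, u' x ≤ 2 * g x * √(u x)) :
    AntitoneOn (fun x ↦ √(u x + ε) - G x) D := by
  have hderiv (x : ℝ) (hx : x ∈ interior D) :
      HasDerivWithinAt (fun x ↦ √(u x + ε) - G x) (u' x / (2 * √(u x + ε)) - g x)
        (interior D) x :=
    (((hu x hx).add_const ε).sqrt (add_pos_of_nonneg_of_pos (hu_nonneg x hx) hε).ne').sub (hG x hx)
  refine antitoneOn_of_hasDerivWithinAt_nonpos hD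
    ((hu_cont.add continuousOn_const).sqrt.sub hG_cont) hderiv fun x hx ↦ sub_nonpos.2 ?_
  have hg := hg_nonneg x hx
  refine div_le_of_le_mul₀ (by positivity) hg ?_
  calc u' x ≤ 2 * g x * √(u x) := hle x hx
    _ ≤ 2 * g x * √(u x + ε) := by gcongr; linarith
    _ = g x * (2 * √(u x + ε)) := by ring

theorem antitoneOn_sqrt_sub_of_deriv_le_mul_sqrt {G g : ℝ → ℝ}
    (hD : Convex ℝ D) (hu_cont : ContinuousOn u D) (hG_cont : ContinuousOn G D)
    (hu : ∀ x ∈ interior D, HasDerivWithinAt u (u' x) (interior D) x)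
    (hG : ∀ x ∈ interior D, HasDerivWithinAt G (g x) (interior D) x)
    (hu_nonneg : ∀ x ∈ interior D, 0 ≤ u x) (hg_nonneg : ∀ x ∈ interior D, 0 ≤ g x)
    (hle : ∀ x ∈ interior D, u' x ≤ 2 * g x * √(u x)) :
    AntitoneOn (fun x ↦ √(u x) - G x) D := by
  intro x hx y hy hxy
  have htendsto (z : ℝ) :
      Filter.Tendsto (fun ε ↦ √(u z + ε) - G z) (nhdsWithin 0 (Ioi 0)) (nhds (√(u z) - G z)) := by
    have hcont : Continuous fun ε ↦ √(u z + ε) - G z := by fun_prop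
    simpa only [add_zero] using (hcont.tendsto 0).mono_left nhdsWithin_le_nhds
  refine le_of_tendsto_of_tendsto (htendsto y) (htendsto x) ?_
  filter_upwards [self_mem_nhdsWithin] with ε hε
  exact antitoneOn_sqrt_add_sub_of_deriv_le_mul_sqrt hε hD hu_cont hG_cont hu hG hu_nonneg
    hg_nonneg hle hx hy hxy

theorem sqrt_sub_sqrt_le_of_deriv_le_exp_mul_sqrt {A c : ℝ} (hA : 0 ≤ A) (hc : c ≠ 0)
    (hD : Convex ℝ D) (hu_cont : ContinuousOn u D)
    (hu : ∀ x ∈ interior D, HasDerivWithinAt u (u' x) (interior D) x)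
    (hu_nonneg : ∀ x ∈ interior D, 0 ≤ u x)
    (hle : ∀ x ∈ interior D, u' x ≤ A * exp (-c * x) * √(u x))
    {x y : ℝ} (hx : x ∈ D) (hy : y ∈ D) (hxy : x ≤ y) :
    √(u y) - √(u x) ≤ A / (2 * c) * (exp (-c * x) - exp (-c * y)) := by
  have hG (z : ℝ) :
      HasDerivAt (fun z ↦ -(A / (2 * c)) * exp (-c * z)) (A / 2 * exp (-c * z)) z := by
    refine (((hasDerivAt_id' z).const_mul (-c)).exp.const_mul (-(A / (2 * c)))).congr_deriv ?_
    field_simp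
  have hanti := antitoneOn_sqrt_sub_of_deriv_le_mul_sqrt hD hu_cont (by fun_prop) hu
    (fun z _ ↦ (hG z).hasDerivWithinAt) hu_nonneg (fun z _ ↦ by positivity)
    (fun z hz ↦ (hle z hz).trans_eq (by ring)) hx hy hxy
  linarith

end SqrtComparison

/-- Gronwall-type comparison. If `u : [0,∞) → ℝ` is differentiable,
nonnegative, `u(0) = 0`, and `u'(t) ≤ A e^{−ct} √(u(t))` for all `t ≥ 0`, then
`u(t) ≤ A²/(4c²)` for all `t ≥ 0`. -/
theorem statement17 (A c : ℝ) (hA : 0 < A) (hc : 0 < c)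
    (u u' : ℝ → ℝ)
    (hnonneg : ∀ t, 0 ≤ t → 0 ≤ u t)
    (h0 : u 0 = 0)
    (hderiv : ∀ t, 0 ≤ t → HasDerivWithinAt u (u' t) (Set.Ici (0 : ℝ)) t)
    (hbound : ∀ t, 0 ≤ t → u' t ≤ A * Real.exp (-c * t) * Real.sqrt (u t)) :
    ∀ t, 0 ≤ t → u t ≤ A ^ 2 / (4 * c ^ 2) := by
  intro t ht
  have hsqrt_sub : √(u t) - √(u 0) ≤ A / (2 * c) * (exp (-c * 0) - exp (-c * t)) :=
    sqrt_sub_sqrt_le_of_deriv_le_exp_mul_sqrt hA.le hc.ne' (convex_Ici 0)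
      (fun x hx ↦ (hderiv x hx).continuousWithinAt)
      (fun x hx ↦ (hderiv x (interior_subset hx)).mono interior_subset)
      (fun x hx ↦ hnonneg x (interior_subset hx)) (fun x hx ↦ hbound x (interior_subset hx))
      self_mem_Ici ht ht
  have hsqrt : √(u t) ≤ A / (2 * c) := by
    calc √(u t) ≤ A / (2 * c) * (1 - exp (-c * t)) := by simpa [h0] using hsqrt_sub
      _ ≤ A / (2 * c) := mul_le_of_le_one_right (by positivity) (by linarith [exp_pos (-c * t)])
  calc u t ≤ (A / (2 * c)) ^ 2 := (sqrt_le_left (by positivity)).1 hsqrt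
    _ = A ^ 2 / (4 * c ^ 2) := by ring
end
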